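/- The torsion subgroup of E(ℚ) is trivial: the only element of finite order in the group E(ℚ) is the identity O. Equivalently, every nonzero rational point of E has infinite order. -/

import Mathlib

open WeierstrassCurve

noncomputable section

/-- The elliptic curve `E : y² = x³ + 17` over `ℚ`. -/
def E : WeierstrassCurve ℚ := ⟨0, 0, 0, 0, 17⟩

/-!
Duplication on `y² = x³ + k` satisfies `x(2P) · 4(x³ + k) = x(x³ - 8k)`. Let `2` be a uniformizer
and `k` a unit for a discrete valuation. Comparing valuations in this formula shows that doubling
strictly increases the absolute value of the (additive) valuation of the `x`-coordinate, as long as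
`x(P)`, `x(2P)` and `y(P)` are nonzero. This is automatic for finite points when `k` is neither a
square (else `x = 0` occurs) nor a cube (else `y = 0` occurs), and then doubling a nonzero multiple
of `P` with the largest possible value contradicts the finiteness of the multiples of `P`.
-/

open WeierstrassCurve.Affine WithZero

theorem eq_zero_of_isOfFinAddOrder_of_lt_nsmul {M α : Type*} [AddMonoid M] [Preorder α]
    (f : M → α) (n : ℕ) (hf : ∀ b : M, b ≠ 0 → n • b ≠ 0 ∧ f b < f (n • b)) {a : M}
    (ha : IsOfFinAddOrder a) : a = 0 := by
  by_contra ha0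
  have hfin : {b ∈ (AddSubmonoid.multiples a : Set M) | b ≠ 0}.Finite :=
    ha.finite_multiples.subset (Set.sep_subset _ _)
  obtain ⟨b, ⟨hb, hb0⟩, hmax⟩ :=
    hfin.exists_maximalFor f _ ⟨a, AddSubmonoid.mem_multiples a, ha0⟩
  obtain ⟨hnb0, hlt⟩ := hf b hb0
  exact hlt.not_ge (hmax ⟨AddSubmonoid.nsmul_mem _ hb n, hnb0⟩ hlt.le)

theorem rat_pow_ne_prime {p n : ℕ} (hp : p.Prime) (hn : n ≠ 1) (x : ℚ) : x ^ n ≠ p := by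
  have : Fact p.Prime := ⟨hp⟩
  intro h
  have hval : (n : ℤ) * padicValRat p x = 1 := by
    rw [← padicValRat.pow, h, padicValRat.self hp.one_lt]
  exact hn (by simpa using Int.eq_one_or_neg_one_of_mul_eq_one hval)

theorem addX_self_mul {K : Type*} [Field K] [DecidableEq K] (W : Affine K) {x y : K}
    (h : W.Equation x y) (hy : y ≠ W.negY x y) :
    W.addX x x (W.slope x x y y) * (4 * x ^ 3 + W.b₂ * x ^ 2 + 2 * W.b₄ * x + W.b₆) =
      x ^ 4 - W.b₄ * x ^ 2 - 2 * W.b₆ * x - W.b₈ := by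
  rw [equation_iff] at h
  have hsq : 4 * x ^ 3 + W.b₂ * x ^ 2 + 2 * W.b₄ * x + W.b₆ = (y - W.negY x y) ^ 2 := by
    simp only [negY, WeierstrassCurve.b₂, WeierstrassCurve.b₄, WeierstrassCurve.b₆]
    linear_combination -4 * h
  have hslope : W.slope x x y y * (y - W.negY x y) =
      3 * x ^ 2 + 2 * W.a₂ * x + W.a₄ - W.a₁ * y := by
    rw [slope_of_Y_ne rfl hy, div_mul_cancel₀ _ (sub_ne_zero.mpr hy)]
  rw [hsq, addX]
  simp only [negY, WeierstrassCurve.b₄, WeierstrassCurve.b₆, WeierstrassCurve.b₈] at hslope ⊢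
  linear_combination
    (W.slope x x y y * (2 * y + W.a₁ * x + W.a₃) + (3 * x ^ 2 + 2 * W.a₂ * x + W.a₄ - W.a₁ * y) +
      W.a₁ * (2 * y + W.a₁ * x + W.a₃)) * hslope - (W.a₁ ^ 2 + 4 * W.a₂ + 8 * x) * h

/-- The Mordell curve `y² = x³ + k`. -/
def mordellCurve {R : Type*} [CommRing R] (k : R) : WeierstrassCurve R := ⟨0, 0, 0, 0, k⟩

/-- The absolute value of the valuation of the `x`-coordinate of a point, written additively, which
measures the growth of a point under doubling. The value `0` at `O` is a placeholder. -/
def absLogX {K : Type*} [Field K] (v : Valuation K ℤᵐ⁰) {W : Affine K} : W.Point → ℤ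
  | .zero => 0
  | .some x _ _ => |log (v x)|

section Mordell

variable {K : Type*} [Field K] {k : K}

theorem mordellCurve_equation_iff {R : Type*} [CommRing R] {k x y : R} :
    (mordellCurve k).toAffine.Equation x y ↔ y ^ 2 = x ^ 3 + k := by
  simp [equation_iff, mordellCurve]

theorem mordellCurve_negY {R : Type*} [CommRing R] {k x y : R} :
    (mordellCurve k).toAffine.negY x y = -y := by
  simp [negY, mordellCurve]

theorem ne_zero_of_mordellCurve_equation {R : Type*} [CommRing R] {k x y : R} (hsq : ¬ IsSquare k)
    (h : (mordellCurve k).toAffine.Equation x y) : x ≠ 0 := by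
  rintro rfl
  exact hsq ⟨y, by linear_combination -mordellCurve_equation_iff.mp h⟩

theorem mordellCurve_addX_self_mul [DecidableEq K] {x y : K}
    (h : (mordellCurve k).toAffine.Equation x y) (hy : y ≠ (mordellCurve k).toAffine.negY x y) :
    (mordellCurve k).toAffine.addX x x ((mordellCurve k).toAffine.slope x x y y) *
      (4 * (x ^ 3 + k)) = x * (x ^ 3 - 8 * k) := by
  have hdup := addX_self_mul _ h hy
  simp only [mordellCurve, WeierstrassCurve.b₂, WeierstrassCurve.b₄, WeierstrassCurve.b₆,
    WeierstrassCurve.b₈] at hdup ⊢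
  linear_combination hdup

theorem log_sub_two_add_log_of_duplication (v : Valuation K ℤᵐ⁰) (h2 : v 2 = exp (-1)) {x z : K}
    (hx : x ≠ 0) (hxk : x ^ 3 + k ≠ 0) (hx8k : x ^ 3 - 8 * k ≠ 0)
    (h : z * (4 * (x ^ 3 + k)) = x * (x ^ 3 - 8 * k)) :
    log (v z) - 2 + log (v (x ^ 3 + k)) = log (v x) + log (v (x ^ 3 - 8 * k)) := by
  have hz : z ≠ 0 := left_ne_zero_of_mul (h ▸ mul_ne_zero hx hx8k)
  have h4 : v 4 = exp (-2) := by
    rw [show (4 : K) = 2 ^ 2 by norm_num, map_pow, h2, ← exp_nsmul]; norm_num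
  rw [← v.ne_zero_iff] at hx hxk hx8k hz
  calc log (v z) - 2 + log (v (x ^ 3 + k)) = log (v (z * (4 * (x ^ 3 + k)))) := by
        rw [map_mul, map_mul, h4, log_mul hz (mul_ne_zero exp_ne_zero hxk),
          log_mul exp_ne_zero hxk, log_exp]
        ring
    _ = log (v x) + log (v (x ^ 3 - 8 * k)) := by rw [h, map_mul, log_mul hx hx8k]

theorem abs_log_lt_abs_log_of_duplication (v : Valuation K ℤᵐ⁰) (h2 : v 2 = exp (-1))
    (hk : v k = 1) {x z : K} (hx : x ≠ 0) (hxk : x ^ 3 + k ≠ 0) (hx8k : x ^ 3 - 8 * k ≠ 0)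
    (h : z * (4 * (x ^ 3 + k)) = x * (x ^ 3 - 8 * k)) :
    |log (v x)| < |log (v z)| := by
  have hlog := log_sub_two_add_log_of_duplication v h2 hx hxk hx8k h
  have h8k : v (8 * k) = exp (-3) := by
    rw [show (8 : K) = 2 ^ 3 by norm_num, map_mul, map_pow, h2, hk, mul_one, ← exp_nsmul]; norm_num
  have h8k_lt : v (8 * k) < 1 := by rw [h8k, ← exp_zero, exp_lt_exp]; norm_num
  rw [← v.ne_zero_iff] at hx hxk hx8k
  rcases lt_trichotomy (v x) 1 with hlt | heq | hgt
  · have hx_le : log (v x) ≤ -1 := Int.le_sub_one_of_lt ((log_lt_log hx one_ne_zero).mpr hlt)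
    have hcube_le : v (x ^ 3) ≤ exp (-3) :=
      le_exp_of_log_le (by rw [map_pow, log_pow, nsmul_eq_mul]; push_cast; lia)
    have hcube_lt : v (x ^ 3) < v k := by
      rw [hk, map_pow]; exact pow_lt_one₀ zero_le hlt three_ne_zero
    have hadd : log (v (x ^ 3 + k)) = 0 := by
      rw [v.map_add_eq_of_lt_right hcube_lt, hk, log_one]
    have hsub : log (v (x ^ 3 - 8 * k)) ≤ -3 :=
      (log_le_iff_le_exp hx8k).mpr (v.map_sub_le hcube_le h8k.le)
    have hz_lt : log (v z) < log (v x) := by lia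
    rw [abs_of_neg (by lia), abs_of_neg (by lia)]
    exact neg_lt_neg hz_lt
  · have hcube : v (x ^ 3) = 1 := by rw [map_pow, heq, one_pow]
    have hadd : log (v (x ^ 3 + k)) ≤ 0 :=
      (log_le_iff_le_exp hxk).mpr (v.map_add_le hcube.le hk.le)
    have hsub : log (v (x ^ 3 - 8 * k)) = 0 := by
      rw [v.map_sub_eq_of_lt_left (hcube ▸ h8k_lt), hcube, log_one]
    have hx_eq : log (v x) = 0 := by rw [heq, log_one]
    have hz_le : 2 ≤ log (v z) := by lia
    rw [hx_eq, abs_zero]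
    exact abs_pos_of_pos (two_pos.trans_le hz_le)
  · have hx_pos : 0 < log (v x) := (log_lt_log one_ne_zero hx).mpr hgt
    have hcube_gt : 1 < v (x ^ 3) := by rw [map_pow]; exact one_lt_pow₀ hgt three_ne_zero
    rw [v.map_add_eq_of_lt_left (hk ▸ hcube_gt),
      v.map_sub_eq_of_lt_left (h8k_lt.trans hcube_gt)] at hlog
    have hz_eq : log (v z) = log (v x) + 2 := by lia
    rw [hz_eq, abs_of_pos hx_pos, abs_of_pos (by lia)]
    lia

theorem absLogX_lt_absLogX_two_nsmul [DecidableEq K] (v : Valuation K ℤᵐ⁰) (h2 : v 2 = exp (-1))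
    (hk : v k = 1) (hsq : ¬ IsSquare k) (hcube : ∀ c : K, c ^ 3 ≠ k)
    {P : (mordellCurve k).toAffine.Point} (hP : P ≠ 0) :
    2 • P ≠ 0 ∧ absLogX v P < absLogX v (2 • P) := by
  match P, hP with
  | .zero, hP => exact absurd rfl hP
  | .some x y hxy, _ =>
    have htwo : (2 : K) ≠ 0 := v.ne_zero_iff.mp (h2 ▸ exp_ne_zero)
    have hfour : (4 : K) ≠ 0 := by
      rw [show (4 : K) = 2 ^ 2 by norm_num]; exact pow_ne_zero 2 htwo
    have hxk : x ^ 3 + k ≠ 0 := fun h0 => hcube (-x) (by linear_combination -h0)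
    have hyneg : y ≠ (mordellCurve k).toAffine.negY x y := by
      rw [mordellCurve_negY, ← sub_ne_zero, sub_neg_eq_add, ← two_mul]
      refine mul_ne_zero htwo fun hy0 => hxk ?_
      rw [← mordellCurve_equation_iff.mp hxy.1, hy0, zero_pow two_ne_zero]
    have hdup := mordellCurve_addX_self_mul hxy.1 hyneg
    have hx : x ≠ 0 := ne_zero_of_mordellCurve_equation hsq hxy.1
    have hz : (mordellCurve k).toAffine.addX x x _ ≠ 0 :=
      ne_zero_of_mordellCurve_equation hsq (equation_add hxy.1 hxy.1 fun h => hyneg h.2)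
    have hx8k : x ^ 3 - 8 * k ≠ 0 :=
      right_ne_zero_of_mul (hdup ▸ mul_ne_zero hz (mul_ne_zero hfour hxk))
    rw [two_nsmul, Point.add_self_of_Y_ne hyneg]
    exact ⟨Point.some_ne_zero _, abs_log_lt_abs_log_of_duplication v h2 hk hx hxk hx8k hdup⟩

end Mordell

theorem torsion_trivial_general {K : Type*} [Field K] [DecidableEq K] (v : Valuation K ℤᵐ⁰)
    (h2 : v 2 = exp (-1)) {k : K} (hk : v k = 1) (hsq : ¬ IsSquare k) (hcube : ∀ c : K, c ^ 3 ≠ k) :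
    IsAddTorsionFree (mordellCurve k).toAffine.Point :=
  .of_not_isOfFinAddOrder fun _ hP hfin => hP <|
    eq_zero_of_isOfFinAddOrder_of_lt_nsmul (absLogX v) 2
      (fun _ => absLogX_lt_absLogX_two_nsmul v h2 hk hsq hcube) hfin

theorem rat_padicValuation_two_intCast_of_odd {n : ℤ} (hn : Odd n) :
    Rat.padicValuation 2 n = 1 := by
  rw [Rat.padicValuation_cast, Int.padicValuation_eq_one_iff]
  exact mod_cast Int.two_dvd_ne_zero.mpr (Int.odd_iff.mp hn)

/-- The torsion subgroup of `E(ℚ)` is trivial: the only point of finite order is the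
identity `O`; equivalently, every nonzero rational point of `E` has infinite order. -/
theorem torsion_trivial :
    (∀ P : E.toAffine.Point, IsOfFinAddOrder P → P = 0) ∧
    (∀ P : E.toAffine.Point, P ≠ 0 → ¬ IsOfFinAddOrder P) := by
  have hodd : Odd (17 : ℤ) := by decide
  have : IsAddTorsionFree E.toAffine.Point :=
    torsion_trivial_general (Rat.padicValuation 2) (Rat.padicValuation_self 2)
      (rat_padicValuation_two_intCast_of_odd hodd) (by norm_num)
      (rat_pow_ne_prime (by norm_num) (by norm_num))
  exact ⟨fun _ => IsOfFinAddOrder.eq_zero', fun _ => not_isOfFinAddOrder_of_isAddTorsionFree⟩
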